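/- For the weight a = (4,5,6) (the weight of the S₁₁-singularity), there exist 3×3 matrices C and D with non-negative integer entries such that |det D| = 1, B_a = C·D, (4,5,6) = (1,1,1)·D, and f_C has an isolated critical point at the origin of ℂ³ (all partial derivatives of f_C vanish at 0, and there is a punctured neighborhood of 0 containing no critical point of f_C); moreover any such C satisfies |det C| = 16. -/

import Mathlib

open Matrix BigOperators

noncomputable section

/-- `f_C(x,y,z) = Σ_{i=1}^{3} x^{c_{i1}} y^{c_{i2}} z^{c_{i3}}` for a 3×3 matrix `C`
with non-negative integer entries. -/
def fC (C : Matrix (Fin 3) (Fin 3) ℕ) : (Fin 3 → ℂ) → ℂ :=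
  fun v => ∑ i : Fin 3, ∏ j : Fin 3, v j ^ C i j

/-- `φ_D(u₁,u₂,u₃) = (u₁^{d_{i1}} u₂^{d_{i2}} u₃^{d_{i3}})_{i=1}^{3}`. -/
def phiD (D : Matrix (Fin 3) (Fin 3) ℕ) : (Fin 3 → ℂ) → (Fin 3 → ℂ) :=
  fun u i => ∏ j : Fin 3, u j ^ D i j

/-- The matrix `B_a` with rows `(a₁+1,a₂,a₃)`, `(a₁,a₂+1,a₃)`, `(a₁,a₂,a₃+1)`. -/
def Bmat (a : Fin 3 → ℕ) : Matrix (Fin 3) (Fin 3) ℕ :=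
  fun i j => a j + if i = j then 1 else 0

/-- `G_a(u₁,u₂,u₃) = u₁^{a₁+1}u₂^{a₂}u₃^{a₃} + u₁^{a₁}u₂^{a₂+1}u₃^{a₃} + u₁^{a₁}u₂^{a₂}u₃^{a₃+1}`. -/
def Ga (a : Fin 3 → ℕ) : (Fin 3 → ℂ) → ℂ :=
  fun u => u 0 ^ (a 0 + 1) * u 1 ^ a 1 * u 2 ^ a 2
         + u 0 ^ a 0 * u 1 ^ (a 1 + 1) * u 2 ^ a 2
         + u 0 ^ a 0 * u 1 ^ a 1 * u 2 ^ (a 2 + 1)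

/-- `H_a(u₁,u₂,u₃) = u₁^{a₁}u₂^{a₂}u₃^{a₃}`. -/
def Ha (a : Fin 3 → ℕ) : (Fin 3 → ℂ) → ℂ :=
  fun u => u 0 ^ a 0 * u 1 ^ a 1 * u 2 ^ a 2

/-- Determinant of a matrix of natural numbers, computed over `ℤ`. -/
def detZ (M : Matrix (Fin 3) (Fin 3) ℕ) : ℤ :=
  (M.map (fun n : ℕ => (n : ℤ))).det

/-- `f` has an isolated critical point at the origin of `ℂ³`: the derivative of `f`
vanishes at `0`, and there is a punctured neighborhood of `0` containing no critical
point of `f`. -/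
def IsolatedCriticalAtZero (f : (Fin 3 → ℂ) → ℂ) : Prop :=
  fderiv ℂ f 0 = 0 ∧
  ∃ ε : ℝ, ε > 0 ∧ ∀ p : Fin 3 → ℂ, p ≠ 0 → ‖p‖ < ε → fderiv ℂ f p ≠ 0

/-!
Write `J` for the all-ones matrix. Then `B_a = 1 + (1,1,1)ᵀ a`, so `det B_a = 1 + a₁ + a₂ + a₃` by the
matrix determinant lemma, and multiplicativity of the determinant gives `|det C|`. As for existence,
`B_a = C D` and `a = (1,1,1) D` together say `(C - J) D = 1`, so one looks for an invertible polynomial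
`f_C` with `det (C - J) = ±1` and `D = (C - J)⁻¹` of the right column sums; for `a = (4,5,6)` the chain
polynomial `x⁴y + y²z + z²` does it.
-/

section Determinant

lemma detZ_mul (C D : Matrix (Fin 3) (Fin 3) ℕ) : detZ (C * D) = detZ C * detZ D := by
  have hmap : (C * D).map (Nat.castRingHom ℤ) =
      C.map (Nat.castRingHom ℤ) * D.map (Nat.castRingHom ℤ) := Matrix.map_mul
  exact (congrArg det hmap).trans (det_mul _ _)

lemma detZ_Bmat (a : Fin 3 → ℕ) : detZ (Bmat a) = 1 + ∑ j, (a j : ℤ) := by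
  have hrank_one : (Bmat a).map (fun n : ℕ => (n : ℤ)) = 1 + vecMulVec 1 (fun j => (a j : ℤ)) := by
    ext i j
    simp [Bmat, one_apply, add_comm]
  rw [detZ, hrank_one, vecMulVec_eq Unit, det_one_add_replicateCol_mul_replicateRow, dotProduct_one]

lemma abs_detZ_eq_of_Bmat_eq_mul {a : Fin 3 → ℕ} {C D : Matrix (Fin 3) (Fin 3) ℕ}
    (hD : |detZ D| = 1) (hB : Bmat a = C * D) : |detZ C| = 1 + ∑ j, (a j : ℤ) :=
  calc |detZ C| = |detZ C| * |detZ D| := by rw [hD, mul_one]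
    _ = |detZ (Bmat a)| := by rw [hB, detZ_mul, abs_mul]
    _ = 1 + ∑ j, (a j : ℤ) := by rw [detZ_Bmat]; exact abs_of_nonneg (by positivity)

end Determinant

section CriticalPoints

lemma fderiv_fC_apply_single (C : Matrix (Fin 3) (Fin 3) ℕ) (v : Fin 3 → ℂ) (j : Fin 3) :
    fderiv ℂ (fC C) v (Pi.single j 1) =
      ∑ i, (∏ k ∈ Finset.univ.erase j, v k ^ C i k) * (C i j * v j ^ (C i j - 1)) := by
  have hpow (i k : Fin 3) :=
    (ContinuousLinearMap.proj (R := ℂ) (φ := fun _ : Fin 3 => ℂ) k).hasFDerivAt (x := v)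
      |>.pow (C i k)
  have hmonomial (i : Fin 3) := HasFDerivAt.finsetProd (u := Finset.univ) fun k _ => hpow i k
  have hfC : HasFDerivAt (fC C) _ v :=
    HasFDerivAt.fun_sum (u := Finset.univ) fun i _ => hmonomial i
  simp [hfC.fderiv, Pi.single_apply]

lemma continuousLinearMap_eq_zero_iff_forall_apply_single {R ι M : Type*} [Semiring R]
    [TopologicalSpace R] [Finite ι] [DecidableEq ι] [AddCommMonoid M] [TopologicalSpace M]
    [Module R M] {L : (ι → R) →L[R] M} : L = 0 ↔ ∀ i, L (Pi.single i 1) = 0 := by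
  refine ⟨fun h i => by simp [h], fun h => ContinuousLinearMap.coe_injective ?_⟩
  exact (Pi.basisFun R ι).ext fun i => by simpa using h i

lemma isolatedCriticalAtZero_of_fderiv_eq_zero_iff {f : (Fin 3 → ℂ) → ℂ}
    (h : ∀ v, fderiv ℂ f v = 0 ↔ v = 0) : IsolatedCriticalAtZero f :=
  ⟨(h 0).2 rfl, 1, one_pos, fun v hv _ => mt (h v).1 hv⟩

/-- The exponent matrix of the chain polynomial `x ^ p * y + y ^ q * z + z ^ r`. Its monomials are
listed in the order `x ^ p * y`, `z ^ r`, `y ^ q * z`, which matches the weight `(4,5,6)`. -/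
def chainMatrix (p q r : ℕ) : Matrix (Fin 3) (Fin 3) ℕ :=
  !![p, 1, 0; 0, 0, r; 0, q, 1]

variable {p q r : ℕ}

lemma fderiv_fC_chainMatrix_eq_zero_iff {v : Fin 3 → ℂ} :
    fderiv ℂ (fC (chainMatrix p q r)) v = 0 ↔
      p * v 0 ^ (p - 1) * v 1 = 0 ∧
      v 0 ^ p + q * v 1 ^ (q - 1) * v 2 = 0 ∧
      r * v 2 ^ (r - 1) + v 1 ^ q = 0 := by
  have herase : (Finset.univ.erase 0 : Finset (Fin 3)) = {1, 2} ∧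
      (Finset.univ.erase 1 : Finset (Fin 3)) = {0, 2} ∧
      (Finset.univ.erase 2 : Finset (Fin 3)) = {0, 1} := by decide
  simp only [continuousLinearMap_eq_zero_iff_forall_apply_single, fderiv_fC_apply_single,
    Fin.forall_fin_succ]
  simp [herase, chainMatrix, Fin.sum_univ_three, mul_comm, mul_left_comm]

lemma fderiv_fC_chainMatrix_eq_zero_iff_eq_zero (hp : p ≠ 0) (hq : q ≠ 0) (hr : 2 ≤ r)
    {v : Fin 3 → ℂ} : fderiv ℂ (fC (chainMatrix p q r)) v = 0 ↔ v = 0 := by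
  have hr₀ : r ≠ 0 := by lia
  have hr₁ : r - 1 ≠ 0 := by lia
  rw [fderiv_fC_chainMatrix_eq_zero_iff]
  refine ⟨fun ⟨hx, hy, hz⟩ => ?_, ?_⟩
  · have hv₁ : v 1 = 0 := by
      by_contra hv₁
      have hv₀ : v 0 = 0 := eq_zero_of_pow_eq_zero (n := p - 1) (by simpa [hp, hv₁] using hx)
      have hv₂ : v 2 = 0 := by simpa [hv₀, hp, hq, hv₁] using hy
      exact hv₁ (eq_zero_of_pow_eq_zero (n := q) (by simpa [hv₂, hr₁] using hz))
    have hv₂ : v 2 = 0 := eq_zero_of_pow_eq_zero (n := r - 1) (by simpa [hv₁, hq, hr₀] using hz)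
    have hv₀ : v 0 = 0 := eq_zero_of_pow_eq_zero (n := p) (by simpa [hv₂] using hy)
    ext i
    fin_cases i <;> assumption
  · rintro rfl
    simp [hp, hq, hr₁]

lemma isolatedCriticalAtZero_fC_chainMatrix (hp : p ≠ 0) (hq : q ≠ 0) (hr : 2 ≤ r) :
    IsolatedCriticalAtZero (fC (chainMatrix p q r)) :=
  isolatedCriticalAtZero_of_fderiv_eq_zero_iff fun _ =>
    fderiv_fC_chainMatrix_eq_zero_iff_eq_zero hp hq hr

end CriticalPoints

theorem stmt_18_general :
    (∃ C D : Matrix (Fin 3) (Fin 3) ℕ,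
      |detZ D| = 1 ∧
      Bmat ![4, 5, 6] = C * D ∧
      (∀ j, (∑ i : Fin 3, D i j) = ![4, 5, 6] j) ∧
      IsolatedCriticalAtZero (fC C)) ∧
    (∀ (a : Fin 3 → ℕ) (C D : Matrix (Fin 3) (Fin 3) ℕ),
      |detZ D| = 1 → Bmat a = C * D → |detZ C| = 1 + ∑ j, (a j : ℤ)) := by
  refine ⟨⟨chainMatrix 4 2 2, !![1, 1, 1; 1, 1, 2; 2, 3, 3], ?_, ?_, ?_, ?_⟩,
    fun a C D => abs_detZ_eq_of_Bmat_eq_mul⟩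
  · simp [detZ, det_fin_three]
  · decide
  · decide
  · exact isolatedCriticalAtZero_fC_chainMatrix four_ne_zero two_ne_zero le_rfl

theorem stmt_18 :
    (∃ C D : Matrix (Fin 3) (Fin 3) ℕ,
      |detZ D| = 1 ∧
      Bmat ![4, 5, 6] = C * D ∧
      (∀ j, (∑ i : Fin 3, D i j) = ![4, 5, 6] j) ∧
      IsolatedCriticalAtZero (fC C)) ∧
    (∀ C D : Matrix (Fin 3) (Fin 3) ℕ,
      |detZ D| = 1 →
      Bmat ![4, 5, 6] = C * D →
      (∀ j, (∑ i : Fin 3, D i j) = ![4, 5, 6] j) →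
      IsolatedCriticalAtZero (fC C) →
      |detZ C| = 16) := by
  refine ⟨stmt_18_general.1, fun C D hD hB _ _ => ?_⟩
  simpa [Fin.sum_univ_three] using stmt_18_general.2 _ C D hD hB
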